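/- Let (w_n)_{n \ge n_0} (n_0 > 0) be a non-decreasing sequence of positive real numbers. Fix a real number \alpha > 1 and a positive integer s, and define F = {n \ge n_0 : w_{n+s} \ge \alpha w_n}. If F has infinite discrete logarithmic measure, i.e. \sum_{n \in F} 1/n = \infty, then \limsup_{r \to \infty} (\log\log w_r)/\log r \ge 1. -/

import Mathlib

/-- if a non-decreasing positive sequence `w` satisfies `w_{n+s} ≥ α w_n`
(`α > 1`, `s ≥ 1`) on a set of infinite discrete logarithmic measure, then
`limsup_{r→∞} (log log w_r)/(log r) ≥ 1`. -/
theorem limsup_loglog_ge_one_of_infinite_log_measure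
    (n0 : ℕ) (hn0 : 0 < n0) (w : ℕ → ℝ)
    (hpos : ∀ n, n0 ≤ n → 0 < w n)
    (hmono : ∀ n, n0 ≤ n → w n ≤ w (n + 1))
    (α : ℝ) (hα : 1 < α) (s : ℕ) (hs : 0 < s)
    (hdiv : ¬ Summable (Set.indicator {n : ℕ | n0 ≤ n ∧ α * w n ≤ w (n + s)}
      (fun n : ℕ => (1 : ℝ) / n))) :
    (1 : EReal) ≤ Filter.limsup
      (fun r : ℕ => ((Real.log (Real.log (w r)) / Real.log r : ℝ) : EReal))
      Filter.atTop := by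
  by_contra hlt
  push Not at hlt
  obtain ⟨c0, hc0, hc01⟩ := EReal.lt_iff_exists_real_btwn.1 hlt
  have hev := Filter.eventually_lt_of_limsup_lt hc0
  have hc01' : c0 < 1 := by exact_mod_cast hc01
  obtain ⟨N1, hN1⟩ := Filter.eventually_atTop.1 hev
  obtain ⟨c, hc1, hcpos, hcc⟩ : ∃ c : ℝ, c < 1 ∧ 0 < c ∧ c0 ≤ c :=
    ⟨max c0 (1/2), max_lt hc01' (by norm_num), lt_max_of_lt_right (by norm_num), le_max_left _ _⟩
  obtain ⟨N, hNn0, hNN1, hN2⟩ : ∃ N, n0 ≤ N ∧ N1 ≤ N ∧ 2 ≤ N :=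
    ⟨max n0 (max N1 2), by simp, by simp, by simp⟩
  have hL : ∀ n, N ≤ n → Real.log (w n) ≤ (n : ℝ) ^ c := by
    intro n hn
    have h1 : Real.log (Real.log (w n)) / Real.log n < c0 := by
      exact_mod_cast hN1 n (hNN1.trans hn)
    have hn2 : (2 : ℝ) ≤ n := by exact_mod_cast hN2.trans hn
    have hlog : 0 < Real.log n := Real.log_pos (by linarith)
    rcases le_or_gt (Real.log (w n)) 0 with h0 | h0
    · exact h0.trans (by positivity)
    · rw [div_lt_iff₀ hlog] at h1
      rw [← Real.log_le_log_iff h0 (by positivity), Real.log_rpow (by linarith)]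
      nlinarith
  obtain ⟨C, hC0, hC⟩ : ∃ C : ℝ, 0 ≤ C ∧ ∀ n : ℕ, N ≤ n →
      ∑ i ∈ Finset.range s, Real.log (w (n + i)) ≤ C * (n : ℝ) ^ c := by
    refine ⟨s * (1 + s : ℝ) ^ c, by positivity, fun n hn => ?_⟩
    have hn2 : (2 : ℝ) ≤ n := by exact_mod_cast hN2.trans hn
    calc _ ≤ ∑ i ∈ Finset.range s, ((1 + s : ℝ) ^ c * (n : ℝ) ^ c) := by
          refine Finset.sum_le_sum fun i hi => (hL _ (by omega)).trans ?_
          rw [← Real.mul_rpow (by positivity) (by positivity)]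
          refine Real.rpow_le_rpow (by positivity) ?_ hcpos.le
          have : (i : ℝ) ≤ s := by exact_mod_cast (Finset.mem_range.1 hi).le
          push_cast
          nlinarith
      _ = _ := by simp; ring
  set S : ℕ → ℝ := fun n => ∑ i ∈ Finset.range s, Real.log (w (n + i)) with hS
  have hSd : ∀ n, S (n + 1) - S n = Real.log (w (n + s)) - Real.log (w n) := by
    intro n
    have h1 := Finset.sum_range_succ (fun i => Real.log (w (n + i))) s
    have h2 := Finset.sum_range_succ' (fun i => Real.log (w (n + i))) s
    have h3 : S (n + 1) = ∑ i ∈ Finset.range s, Real.log (w (n + (i + 1))) := by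
      simp only [hS]
      refine Finset.sum_congr rfl fun i _ => ?_
      congr 2; omega
    rw [h3]
    simp only [hS]
    simp only [add_zero] at h2
    linarith
  have hmono' : ∀ n, n0 ≤ n → ∀ k, w n ≤ w (n + k) := by
    intro n hn k
    induction k with
    | zero => simp
    | succ k ih => exact ih.trans (hmono (n + k) (by omega))
  have hd0 : ∀ n, n0 ≤ n → 0 ≤ S (n + 1) - S n := by
    intro n hn
    rw [hSd]
    exact sub_nonneg.2 (Real.log_le_log (hpos n hn) (hmono' n hn s))
  have hla : 0 < Real.log α := Real.log_pos hα
  apply hdiv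
  rw [← summable_nat_add_iff N]
  -- summability of the increments divided by the index
  have key : Summable (fun k : ℕ => (S (k + N + 1) - S (k + N)) / ((k + N : ℕ) : ℝ)) := by
    have hsum : Summable (fun k : ℕ => C * ((k + N : ℕ) : ℝ) ^ (c - 2)) := by
      have := (Real.summable_nat_rpow (p := c - 2)).2 (by linarith)
      exact ((summable_nat_add_iff N).2 this).mul_left C
    have hpart : ∀ M : ℕ, ∑ k ∈ Finset.range M,
        (S (k + N + 1) - S (k + N)) / ((k + N : ℕ) : ℝ) ≤
        S (M + N) / ((M + N : ℕ) : ℝ) - S N / (N : ℝ)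
          + ∑ k ∈ Finset.range M, C * ((k + N : ℕ) : ℝ) ^ (c - 2) := by
      intro M
      induction M with
      | zero => simp
      | succ M ih =>
        rw [Finset.sum_range_succ, Finset.sum_range_succ]
        have e : M + 1 + N = M + N + 1 := by omega
        rw [e]
        have hx : (2 : ℝ) ≤ ((M + N : ℕ) : ℝ) := by exact_mod_cast (by omega : 2 ≤ M + N)
        have hCb := hC (M + N + 1) (by omega)
        have hcast : ((M + N + 1 : ℕ) : ℝ) = ((M + N : ℕ) : ℝ) + 1 := by push_cast; ring
        change S (M + N + 1) ≤ _ at hCb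
        rw [hcast] at hCb ⊢
        generalize ((M + N : ℕ) : ℝ) = x at *
        have hx0 : 0 < x := by linarith
        have h1 : S (M + N + 1) / (x * (x + 1)) ≤ C * x ^ (c - 2) := by
          calc S (M + N + 1) / (x * (x + 1)) ≤ C * (x + 1) ^ c / (x * (x + 1)) := by gcongr
            _ = C * (x + 1) ^ (c - 1) / x := by
                rw [Real.rpow_sub_one (by positivity)]; field_simp
            _ ≤ C * x ^ (c - 1) / x := by
                have := Real.rpow_le_rpow_of_nonpos hx0 (by linarith : x ≤ x + 1)
                  (by linarith : c - 1 ≤ 0)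
                gcongr
            _ = C * x ^ (c - 2) := by
                rw [show c - 2 = c - 1 - 1 by ring, Real.rpow_sub_one hx0.ne' (c - 1)]; ring
        have h2 : (S (M + N + 1) - S (M + N)) / x = S (M + N + 1) / (x + 1) - S (M + N) / x
            + S (M + N + 1) / (x * (x + 1)) := by
          field_simp; ring
        linarith
    refine summable_of_sum_range_le (c := C - S N / (N : ℝ)
      + ∑' k : ℕ, C * ((k + N : ℕ) : ℝ) ^ (c - 2)) (fun k => ?_) (fun M => ?_)
    · exact div_nonneg (hd0 _ (by omega)) (by positivity)
    · refine (hpart M).trans ?_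
      have h1 := hsum.sum_le_tsum (Finset.range M) (fun k _ => by positivity)
      have h2 : S (M + N) / ((M + N : ℕ) : ℝ) ≤ C := by
        have hx : (1 : ℝ) ≤ ((M + N : ℕ) : ℝ) := by exact_mod_cast (by omega : 1 ≤ M + N)
        rw [div_le_iff₀ (by linarith)]
        refine (hC (M + N) (by omega)).trans ?_
        gcongr
        calc _ ≤ ((M + N : ℕ) : ℝ) ^ (1 : ℝ) := Real.rpow_le_rpow_of_exponent_le hx hc1.le
          _ = _ := Real.rpow_one _
      linarith
  refine Summable.of_nonneg_of_le (fun k => ?_) (fun k => ?_) (key.mul_left (Real.log α)⁻¹)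
  · exact Set.indicator_nonneg (fun n _ => by positivity) _
  · have hk0 := hd0 (k + N) (by omega)
    by_cases hk : k + N ∈ {n : ℕ | n0 ≤ n ∧ α * w n ≤ w (n + s)}
    · rw [Set.indicator_of_mem hk]
      have hp := hpos (k + N) hk.1
      have h1 := Real.log_le_log (by positivity) hk.2
      rw [Real.log_mul (by positivity) hp.ne'] at h1
      have h2 : Real.log α ≤ S (k + N + 1) - S (k + N) := by rw [hSd]; linarith
      rw [← mul_div_assoc]
      gcongr
      rw [inv_mul_eq_div, le_div_iff₀ hla]
      linarith
    · rw [Set.indicator_of_notMem hk]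
      exact mul_nonneg (by positivity) (div_nonneg hk0 (by positivity))
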